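/- arXiv:1601.03174 — 2 statements merged into one kernel-verified Lean document; each statement's English description precedes it below -/
import Mathlib

section
/- Let k ≥ 2 and let G be a d-regular graph with n vertices and m edges, where d − (k−1) ≥ 3. Let G' be the subdivision of G. Then G contains a clique on k vertices if and only if there exists a vertex set U ⊆ V(G') with |U| ≤ k(k−1)/2 such that the degree multiset of G'−U consists of n−k copies of d, k copies of d−(k−1), and m − k(k−1)/2 copies of 2. -/
/-!
Let `H` be the spanning subgraph of `G` whose edges are those with subdivision vertex in `U`.
Deleting `U` from the subdivision lowers the degree of each original vertex by its degree in `H`.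
If `H` is the complete graph on a `k`-clique, this gives the required degrees. Conversely,
subdivision vertices have degree at most `2`, so the degrees greater than `2` belong exactly to the
original vertices; hence `k` vertices have degree `k - 1` in `H` and all others are isolated in `H`,
which forces `H` to be complete on those `k` vertices.
-/

/-- The degree of a vertex, as the `ncard` of its neighbor set. -/
noncomputable def ndeg {V : Type*} (H : SimpleGraph V) (v : V) : ℕ :=
  (H.neighborSet v).ncard

/-- The subdivision of a graph `G`: every edge `uv` is replaced by a new vertex
(the corresponding element of `G.edgeSet`) adjacent exactly to `u` and `v`. -/
def subdiv {V : Type*} (G : SimpleGraph V) : SimpleGraph (V ⊕ G.edgeSet) where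
  Adj x y :=
    match x, y with
    | Sum.inl u, Sum.inr e => u ∈ (e : Sym2 V)
    | Sum.inr e, Sum.inl u => u ∈ (e : Sym2 V)
    | _, _ => False
  symm := ⟨by rintro (u | e) (w | f) h <;> exact h⟩
  loopless := ⟨by rintro (u | e) h <;> exact h⟩

section Multisets

open Finset Multiset

variable {ι β : Type*} {f : ι → β} {s : Finset ι} {x y : β}

theorem map_val_eq_replicate_add_replicate [DecidableEq ι] {K : Finset ι} (hKs : K ⊆ s)
    (hx : ∀ i ∈ s \ K, f i = x) (hy : ∀ i ∈ K, f i = y) :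
    s.val.map f = replicate (#s - #K) x + replicate #K y := by
  have hsplit : s.val = (s \ K).val + K.val := by
    rw [sdiff_val, Multiset.sub_add_cancel (val_le_iff.2 hKs)]
  rw [hsplit, Multiset.map_add, map_congr rfl hx, map_congr rfl hy, map_const', map_const',
    card_val, card_val, card_sdiff_of_subset hKs]

theorem exists_subset_of_map_val_eq_replicate_add_replicate {a b : ℕ}
    (hxy : x ≠ y) (h : s.val.map f = replicate a x + replicate b y) :
    ∃ K ⊆ s, #K = b ∧ (∀ i ∈ K, f i = y) ∧ ∀ i ∈ s, i ∉ K → f i = x := by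
  classical
  refine ⟨{i ∈ s | f i = y}, Finset.filter_subset _ _, ?_,
    fun i hi ↦ (Finset.mem_filter.1 hi).2, ?_⟩
  · have hcount := congrArg (count y) h
    simpa [count_map, count_replicate, hxy, ← filter_val, eq_comm (a := y)] using hcount
  · intro i hi hiK
    have hmem : f i ∈ replicate a x + replicate b y := h ▸ mem_map_of_mem f hi
    rcases Multiset.mem_add.1 hmem with hfx | hfy
    · exact eq_of_mem_replicate hfx
    · exact (hiK (Finset.mem_filter.2 ⟨hi, eq_of_mem_replicate hfy⟩)).elim

end Multisets

section VertexDeletion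

variable {W : Type*} (H : SimpleGraph W)

/-- The degree of `x` in `H - U`. It is also defined for `x ∈ U`, where it counts the neighbors of
`x` outside `U`. -/
noncomputable def ndegDelete (U : Set W) (x : W) : ℕ :=
  (H.neighborSet x \ U).ncard

/-- The degree multiset of `H - U`. -/
noncomputable def degreesDelete [Fintype W] [DecidableEq W] (U : Finset W) : Multiset ℕ :=
  (Finset.univ \ U).val.map (ndegDelete H U)

end VertexDeletion

section Cliques

variable {V : Type*} {H : SimpleGraph V}

theorem adj_iff_ne_of_isClique {K : Set V} (hK : H.IsClique K) {v w : V} (hv : v ∈ K)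
    (hw : w ∈ K) : H.Adj v w ↔ v ≠ w :=
  ⟨SimpleGraph.Adj.ne, hK hv hw⟩

theorem isClique_of_ndeg_eq_card_sub_one [Finite V] {K : Finset V}
    (hK : ∀ v ∈ K, ndeg H v = K.card - 1) (hKc : ∀ v ∉ K, ndeg H v = 0) : H.IsClique K := by
  classical
  have mem_of_adj {v w : V} (hvw : H.Adj v w) : w ∈ K := by
    by_contra hw
    have hempty : H.neighborSet w = ∅ := (Set.ncard_eq_zero).1 (hKc w hw)
    exact hempty.subset hvw.symm
  intro v hv w hw hvw
  have hneighbors : H.neighborSet v = K.erase v := by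
    refine Set.eq_of_subset_of_ncard_le (fun u hu ↦ ?_) ?_
    · exact Finset.mem_coe.2 (Finset.mem_erase.2 ⟨hu.ne', mem_of_adj hu⟩)
    · rw [Set.ncard_coe_finset, Finset.card_erase_of_mem hv]
      exact (hK v hv).ge
  exact hneighbors.superset (Finset.mem_coe.2 (Finset.mem_erase.2 ⟨hvw.symm, hw⟩))

end Cliques

section Subdivision

open Finset

variable {V : Type*} (G : SimpleGraph V)

/-- The spanning subgraph of `G` consisting of the edges whose subdivision vertex lies in `S`;
the original vertices in `S` play no role. -/
def edgeSubgraph (S : Set (V ⊕ G.edgeSet)) : SimpleGraph V :=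
  SimpleGraph.fromEdgeSet (Subtype.val '' (Sum.inr ⁻¹' S))

variable {G}

theorem edgeSubgraph_adj {S : Set (V ⊕ G.edgeSet)} {v w : V} :
    (edgeSubgraph G S).Adj v w ↔ ∃ h : G.Adj v w, Sum.inr ⟨s(v, w), h⟩ ∈ S := by
  simp only [edgeSubgraph, SimpleGraph.fromEdgeSet_adj, Set.mem_image, Set.mem_preimage,
    Subtype.exists, exists_and_right, exists_eq_right, SimpleGraph.mem_edgeSet]
  exact ⟨And.left, fun h ↦ ⟨h, h.1.ne⟩⟩

theorem edgeSubgraph_le (S : Set (V ⊕ G.edgeSet)) : edgeSubgraph G S ≤ G :=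
  fun _ _ h ↦ (edgeSubgraph_adj.1 h).1

theorem edgeSubgraph_univ : edgeSubgraph G Set.univ = G := by
  ext v w
  simp [edgeSubgraph_adj]

theorem ndeg_edgeSubgraph (S : Set (V ⊕ G.edgeSet)) (v : V) :
    ndeg (edgeSubgraph G S) v = ((subdiv G).neighborSet (Sum.inl v) ∩ S).ncard := by
  refine Set.ncard_congr
    (fun w hw ↦ Sum.inr ⟨s(v, w), (edgeSubgraph_adj.1 hw).1⟩) (fun w hw ↦ ?_) ?_ ?_
  · exact ⟨Sym2.mem_mk_left v w, (edgeSubgraph_adj.1 hw).2⟩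
  · intro w w' _ _ heq
    exact Sym2.congr_right.1 (congrArg Subtype.val (Sum.inr.inj heq))
  · rintro (u | ⟨e, he⟩) ⟨hadj, hS⟩
    · exact hadj.elim
    · obtain ⟨w, rfl⟩ := Sym2.mem_iff_exists.1 (show v ∈ e from hadj)
      exact ⟨w, edgeSubgraph_adj.2 ⟨he, hS⟩, rfl⟩

theorem ndeg_edgeSubgraph_add_ndegDelete_subdiv_inl [Finite V] (U : Set (V ⊕ G.edgeSet)) (v : V) :
    ndeg (edgeSubgraph G U) v + ndegDelete (subdiv G) U (Sum.inl v) = ndeg G v := by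
  have hG := ndeg_edgeSubgraph (G := G) Set.univ v
  rw [edgeSubgraph_univ, Set.inter_univ] at hG
  rw [hG, ndeg_edgeSubgraph, ndegDelete, Set.ncard_inter_add_ncard_sdiff_eq_ncard]

theorem neighborSet_subdiv_inr (e : G.edgeSet) :
    (subdiv G).neighborSet (Sum.inr e) = Sum.inl '' {v | v ∈ (e : Sym2 V)} := by
  ext (v | e')
  · simp [subdiv]
  · simp [subdiv]

theorem ndeg_subdiv_inr (e : G.edgeSet) : ndeg (subdiv G) (Sum.inr e) = 2 := by
  rw [ndeg, neighborSet_subdiv_inr, Set.ncard_image_of_injective _ Sum.inl_injective]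
  obtain ⟨⟨v, w⟩, hvw⟩ := e
  have hends : {u | u ∈ s(v, w)} = {v, w} := by
    ext u
    simp
  exact hends ▸ Set.ncard_pair (G.ne_of_adj hvw)

theorem ndegDelete_subdiv_inr_le_two (U : Set (V ⊕ G.edgeSet)) (e : G.edgeSet) :
    ndegDelete (subdiv G) U (Sum.inr e) ≤ 2 := by
  rw [← ndeg_subdiv_inr e]
  refine Set.ncard_le_ncard Set.sdiff_subset (Set.finite_of_ncard_ne_zero ?_)
  exact (ndeg_subdiv_inr e).trans_ne two_ne_zero

theorem ndegDelete_subdiv_inr_eq_two (F : Set G.edgeSet) (e : G.edgeSet) :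
    ndegDelete (subdiv G) (Sum.inr '' F) (Sum.inr e) = 2 := by
  have hdisjoint : Disjoint ((subdiv G).neighborSet (Sum.inr e)) (Sum.inr '' F) :=
    neighborSet_subdiv_inr e ▸ Set.disjoint_image_inl_image_inr
  rw [ndegDelete, sdiff_eq_left.2 hdisjoint, ← ndeg, ndeg_subdiv_inr]

variable [Fintype V] [DecidableEq V] [Fintype G.edgeSet]

theorem degreesDelete_subdiv_map_inr (F : Finset G.edgeSet) :
    degreesDelete (subdiv G) (F.map .inr) =
      univ.val.map (fun v ↦ ndegDelete (subdiv G) (Sum.inr '' F) (Sum.inl v)) +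
        Multiset.replicate (G.edgeSet.ncard - #F) 2 := by
  have hcompl : univ \ F.map .inr = (univ : Finset V).disjSum Fᶜ := by
    ext (v | e) <;> simp
  have hcoe : ((F.map .inr : Finset (V ⊕ G.edgeSet)) : Set (V ⊕ G.edgeSet)) = Sum.inr '' F :=
    coe_map _ _
  rw [degreesDelete, hcompl, hcoe, val_disjSum, Multiset.disjSum, Multiset.map_add,
    Multiset.map_map, Multiset.map_map]
  congr 1
  rw [Multiset.map_congr rfl fun e _ ↦ ndegDelete_subdiv_inr_eq_two F e, Multiset.map_const',
    card_val, card_compl, Set.ncard_eq_toFinset_card', Set.toFinset_card]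

theorem filter_two_lt_degreesDelete_subdiv_le (U : Finset (V ⊕ G.edgeSet)) :
    (degreesDelete (subdiv G) U).filter (2 < ·) ≤
      univ.val.map fun v ↦ ndegDelete (subdiv G) U (Sum.inl v) := by
  have hinl : {x ∈ univ \ U | 2 < ndegDelete (subdiv G) U x} ⊆ univ.map .inl := by
    rintro (v | e) hx
    · simp
    · exact absurd (mem_filter.1 hx).2 (ndegDelete_subdiv_inr_le_two _ e).not_gt
  rw [degreesDelete, Multiset.filter_map]
  refine (Multiset.map_le_map (val_le_iff.2 hinl)).trans_eq ?_
  rw [map_val, Multiset.map_map]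
  rfl

theorem map_ndegDelete_subdiv_inl_eq {U : Finset (V ⊕ G.edgeSet)} {A B : Multiset ℕ}
    (hU : degreesDelete (subdiv G) U = A + B) (hA : ∀ a ∈ A, 2 < a) (hB : ∀ b ∈ B, b ≤ 2)
    (hcard : Fintype.card V ≤ A.card) :
    univ.val.map (fun v ↦ ndegDelete (subdiv G) U (Sum.inl v)) = A := by
  have hfilter : (degreesDelete (subdiv G) U).filter (2 < ·) = A := by
    rw [hU, Multiset.filter_add, Multiset.filter_eq_self.2 hA,
      Multiset.filter_eq_nil.2 fun b hb ↦ (hB b hb).not_gt, add_zero]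
  refine (Multiset.eq_of_le_of_card_le ?_ (by simpa using hcard)).symm
  exact hfilter ▸ filter_two_lt_degreesDelete_subdiv_le U

end Subdivision

section EdgesWithin

open Finset

variable {V : Type*} [DecidableEq V] (G : SimpleGraph V) [Fintype G.edgeSet]

/-- The edges of `G` with both ends in `K`. -/
def edgesWithin (K : Finset V) : Finset G.edgeSet :=
  {e | (e : Sym2 V) ∈ K.sym2}

variable {G} {K : Finset V}

theorem card_edgesWithin (hK : G.IsClique K) : #(edgesWithin G K) = #K * (#K - 1) / 2 := by
  have hpairs : (edgesWithin G K).map (.subtype _) = K.offDiag.image Sym2.mk.uncurry := by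
    rw [← Sym2.filter_image_mk_not_isDiag, ← sym2_eq_image]
    ext ⟨v, w⟩
    simpa [edgesWithin] using fun hv hw ↦ adj_iff_ne_of_isClique hK hv hw
  rw [← card_map, hpairs, Sym2.card_image_offDiag, Nat.choose_two_right]

theorem edgeSubgraph_edgesWithin_adj (hK : G.IsClique K) {v w : V} :
    (edgeSubgraph G (Sum.inr '' (edgesWithin G K))).Adj v w ↔ v ∈ K ∧ w ∈ K ∧ v ≠ w := by
  have hadj (hv : v ∈ K) : G.Adj v w ∧ w ∈ K ↔ w ∈ K ∧ v ≠ w := by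
    rw [and_comm]
    exact and_congr_right fun hw ↦ adj_iff_ne_of_isClique hK hv hw
  simpa [edgeSubgraph_adj, edgesWithin] using hadj

theorem ndeg_edgeSubgraph_edgesWithin (hK : G.IsClique K) (v : V) :
    ndeg (edgeSubgraph G (Sum.inr '' (edgesWithin G K))) v = if v ∈ K then #K - 1 else 0 := by
  have hneighbors : (edgeSubgraph G (Sum.inr '' (edgesWithin G K))).neighborSet v =
      if v ∈ K then (K.erase v : Set V) else ∅ := by
    ext w
    split_ifs with hv <;> simp [edgeSubgraph_edgesWithin_adj hK, hv, and_comm, eq_comm]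
  rw [ndeg, hneighbors]
  split_ifs with hv
  · rw [Set.ncard_coe_finset, card_erase_of_mem hv]
  · exact Set.ncard_empty V

theorem ndegDelete_subdiv_edgesWithin_inl [Finite V] (hK : G.IsClique K) (v : V) :
    ndegDelete (subdiv G) (Sum.inr '' (edgesWithin G K)) (Sum.inl v) =
      if v ∈ K then ndeg G v - (#K - 1) else ndeg G v := by
  have hdeg := ndeg_edgeSubgraph_add_ndegDelete_subdiv_inl
    (Sum.inr '' (edgesWithin G K : Set G.edgeSet)) v
  rw [ndeg_edgeSubgraph_edgesWithin hK] at hdeg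
  split_ifs at hdeg ⊢ <;> omega

end EdgesWithin

theorem clique_iff_vertexDeletion_in_subdivision_to_degree_sequence
    {V : Type*} [Fintype V] [DecidableEq V] (G : SimpleGraph V) [DecidableRel G.Adj]
    (n m k d : ℕ) (hk : 2 ≤ k) (hd : 3 ≤ d - (k - 1))
    (hn : Fintype.card V = n) (hm : G.edgeSet.ncard = m)
    (hreg : ∀ v : V, ndeg G v = d) :
    (∃ K : Finset V, G.IsNClique k K) ↔
      ∃ U : Finset (V ⊕ G.edgeSet),
        U.card ≤ k * (k - 1) / 2 ∧
        ((Finset.univ \ U).val.map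
            fun x => (((subdiv G).neighborSet x) \ ↑U).ncard) =
          Multiset.replicate (n - k) d + Multiset.replicate k (d - (k - 1)) +
            Multiset.replicate (m - k * (k - 1) / 2) 2 := by
  constructor
  · rintro ⟨K, hK⟩
    have hcard : (edgesWithin G K).card = k * (k - 1) / 2 :=
      hK.card_eq ▸ card_edgesWithin hK.isClique
    refine ⟨(edgesWithin G K).map .inr, by rw [Finset.card_map, hcard], ?_⟩
    refine (degreesDelete_subdiv_map_inr _).trans ?_
    simp only [ndegDelete_subdiv_edgesWithin_inl hK.isClique, hreg, hK.card_eq]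
    rw [map_val_eq_replicate_add_replicate K.subset_univ (x := d) (y := d - (k - 1))
      (by simp +contextual) (by simp +contextual), Finset.card_univ, hn, hm, hK.card_eq, hcard]
  · rintro ⟨U, -, hU⟩
    have hlarge : ∀ a ∈ Multiset.replicate (n - k) d + Multiset.replicate k (d - (k - 1)),
        2 < a := by grind [Multiset.mem_replicate]
    have hinl := map_ndegDelete_subdiv_inl_eq hU hlarge
      (fun _ hb ↦ (Multiset.eq_of_mem_replicate hb).le)
      (by simp only [Multiset.card_add, Multiset.card_replicate, hn]; omega)
    obtain ⟨K, -, hcard, hK, hKc⟩ :=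
      exists_subset_of_map_val_eq_replicate_add_replicate (by omega) hinl
    have hdeg (v : V) := ndeg_edgeSubgraph_add_ndegDelete_subdiv_inl (U : Set (V ⊕ G.edgeSet)) v
    have hin : ∀ v ∈ K, ndeg (edgeSubgraph G U) v = K.card - 1 := by grind
    have hout : ∀ v ∉ K, ndeg (edgeSubgraph G U) v = 0 := by grind
    exact ⟨K, (isClique_of_ndeg_eq_card_sub_one hin hout).mono (edgeSubgraph_le _), hcard⟩
end

section
/- Let k be a nonnegative integer, let σ be a finite multiset of nonnegative integers with maximum Δ, and let G be a graph with maximum degree at most Δ. For each i ∈ {0, …, Δ} let W_i = {v ∈ V(G) : d_G(v) = i}, δ_i = |W_i|, s_i = min(δ_i, 2k(Δ+1)), let W_i' ⊆ W_i be any subset of size s_i, and let W = W_0' ∪ ⋯ ∪ W_Δ'. Assume that for every i, σ contains at least δ_i − s_i copies of i. Let h = Δ+2 and let G' be the graph obtained from the induced subgraph G[W] by adding h new pairwise adjacent vertices v_1, …, v_h and, for every u ∈ W with r = |N_G(u)∖W| ≥ 1, adding the edges uv_1, …, uv_r. Let σ' be the multiset {d_{G'}(v_1), …, d_{G'}(v_h)}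 together with the multiset obtained from σ by removing, for each i ∈ {0, …, Δ}, exactly δ_i − s_i copies of i. Then G' has at most 2k(Δ+1)² + Δ + 2 vertices, and there exists a set A of unordered pairs of distinct non-adjacent vertices of G with |A| ≤ k and degree multiset of G+A equal to σ if and only if there exists a set A' of unordered pairs of distinct non-adjacent vertices of G' with |A'| ≤ k and degree multiset of G'+A' equal to σ'. -/
/-- The graph obtained from `G[W]` by adding `h` new pairwise adjacent vertices
`v_1, …, v_h` (here indexed by `Fin h`) and joining every `u ∈ W` to
`v_1, …, v_r`, where `r = |N_G(u) ∖ W|`. -/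
def kernelGraph {V : Type*} (G : SimpleGraph V) (W : Finset V) (h : ℕ) :
    SimpleGraph (↥W ⊕ Fin h) where
  Adj x y :=
    match x, y with
    | Sum.inl u, Sum.inl w => G.Adj ↑u ↑w
    | Sum.inl u, Sum.inr j => (j : ℕ) < ((G.neighborSet ↑u) \ ↑W).ncard
    | Sum.inr j, Sum.inl u => (j : ℕ) < ((G.neighborSet ↑u) \ ↑W).ncard
    | Sum.inr i, Sum.inr j => i ≠ j
  symm := by
    constructor
    rintro (u | i) (w | j) hxy
    · exact hxy.symm
    · exact hxy
    · exact hxy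
    · exact hxy.symm
  loopless := by
    constructor
    rintro (u | i) hxy
    · exact G.loopless.irrefl _ hxy
    · exact hxy rfl

/-!
Think of the added pairs as the edges of a graph `H` that is edge-disjoint from `G`; then degrees
simply add up in `G ⊔ H`.

Exchange: `H` has at most `2k` non-isolated vertices. If one of them, `x`, lies outside `W`, then
the class of `x` was truncated, so `W` contains `2k(Δ+1)` vertices of the same `G`-degree as `x`.
One of these, `y`, is neither equal nor adjacent to any other non-isolated vertex of `H`, so
swapping `x` and `y` in `H` creates no conflict with `G` and keeps the degree multiset. Repeating
this, one may assume that `H` lives on `W`.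

Transfer: the kernel graph agrees with `G` on `W`, both as an induced subgraph and in the degrees,
so a graph on `W` solves one instance if and only if it solves the other. Every new vertex has
degree larger than `Δ`, while every entry of `σ` is at most `Δ`; hence a solution of the kernel
instance cannot touch the new vertices, and it lives on `W` as well.
-/

open Finset

section FinsetLemmas

theorem ncard_setOf_fin_val_lt {n r : ℕ} (hr : r ≤ n) : {j : Fin n | (j : ℕ) < r}.ncard = r := by
  rw [Set.ncard_eq_toFinset_card', Set.toFinset_ofPred, Fin.card_filter_val_lt, min_eq_right hr]

theorem compl_map_inl_univ {α β : Type*} [Fintype α] [Fintype β] [DecidableEq α] [DecidableEq β] :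
    (univ.map Function.Embedding.inl : Finset (α ⊕ β))ᶜ = univ.map Function.Embedding.inr := by
  ext (a | b) <;> simp

theorem count_sum_range_replicate (n j : ℕ) (c : ℕ → ℕ) :
    (∑ i ∈ range n, Multiset.replicate (c i) i).count j = if j < n then c j else 0 := by
  simp only [Multiset.count_sum', Multiset.count_replicate, sum_ite_eq', mem_range]

theorem sum_range_replicate_le {n : ℕ} {c : ℕ → ℕ} {σ : Multiset ℕ}
    (hc : ∀ i < n, c i ≤ σ.count i) : ∑ i ∈ range n, Multiset.replicate (c i) i ≤ σ := by
  rw [Multiset.le_iff_count]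
  intro j
  rw [count_sum_range_replicate]
  split_ifs with hj
  · exact hc j hj
  · exact Nat.zero_le _

theorem eq_of_add_map_eq_add_map_of_le {κ : Type*} [Fintype κ] {Δ : ℕ} {g g' : κ → ℕ}
    {s t : Multiset ℕ} (hg : ∀ j, Δ < g j) (hle : g ≤ g') (ht : ∀ d ∈ t, d ≤ Δ)
    (h : univ.val.map g' + s = univ.val.map g + t) : g = g' := by
  have filter_map_eq (f : κ → ℕ) (hf : ∀ j, Δ < f j) :
      (univ.val.map f).filter (Δ < ·) = univ.val.map f :=
    Multiset.filter_eq_self.2 fun d hd => by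
      obtain ⟨j, -, rfl⟩ := Multiset.mem_map.1 hd
      exact hf j
  have filter_t : t.filter (Δ < ·) = 0 := Multiset.filter_eq_nil.2 fun d hd => (ht d hd).not_gt
  have h_large : univ.val.map g' + s.filter (Δ < ·) = univ.val.map g := by
    have := congrArg (Multiset.filter (Δ < ·)) h
    rwa [Multiset.filter_add, Multiset.filter_add, filter_map_eq g hg,
      filter_map_eq g' fun j => (hg j).trans_le (hle j), filter_t, add_zero] at this
  have filter_s : s.filter (Δ < ·) = 0 := by
    have := congrArg Multiset.card h_large
    rw [Multiset.card_add, Multiset.card_map, Multiset.card_map] at this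
    exact Multiset.card_eq_zero.1 (by omega)
  rw [filter_s, add_zero] at h_large
  have h_sum : ∑ j, g j = ∑ j, g' j := congrArg Multiset.sum h_large.symm
  exact funext fun j => (sum_eq_sum_iff_of_le fun j _ => hle j).1 h_sum j (mem_univ j)

end FinsetLemmas

section GraphLemmas

variable {α β : Type*}

theorem ndeg_eq_degree (G : SimpleGraph α) (v : α) [Fintype (G.neighborSet v)] :
    ndeg G v = G.degree v := by
  rw [ndeg, Set.ncard_eq_toFinset_card', ← SimpleGraph.card_neighborFinset_eq_degree,
    SimpleGraph.neighborFinset]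

theorem ndeg_sup_of_disjoint [Finite α] {G H : SimpleGraph α} (h : Disjoint G H) (v : α) :
    ndeg (G ⊔ H) v = ndeg G v + ndeg H v := by
  rw [ndeg, SimpleGraph.neighborSet_sup,
    Set.ncard_union_eq (SimpleGraph.disjoint_neighborSet.2 h v), ndeg, ndeg]

theorem ndeg_eq_zero_iff_notMem_support [Finite α] {G : SimpleGraph α} {v : α} :
    ndeg G v = 0 ↔ v ∉ G.support := by
  have := Fintype.ofFinite (G.neighborSet v)
  rw [ndeg_eq_degree, SimpleGraph.degree_eq_zero_iff_notMem_support]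

theorem ndeg_map (f : α ↪ β) (G : SimpleGraph α) (v : α) : ndeg (G.map f) (f v) = ndeg G v := by
  rw [ndeg, SimpleGraph.neighborSet_map, Set.ncard_image_of_injective _ f.injective, ndeg]

theorem ndeg_map_of_notMem_range (f : α ↪ β) (G : SimpleGraph α) {w : β}
    (hw : w ∉ Set.range f) : ndeg (G.map f) w = 0 := by
  have h_nbhd : (G.map f).neighborSet w = ∅ := by
    rw [Set.eq_empty_iff_forall_notMem]
    rintro _ ⟨-, u, -, -, hu, -⟩
    exact hw ⟨u, hu⟩
  rw [ndeg, h_nbhd, Set.ncard_empty]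

theorem ncard_edgeSet_map (f : α ↪ β) (G : SimpleGraph α) :
    (G.map f).edgeSet.ncard = G.edgeSet.ncard := by
  rw [SimpleGraph.edgeSet_map, Set.ncard_image_of_injective _ f.sym2Map.injective]

theorem disjoint_map_iff_disjoint_comap (f : α ↪ β) {G : SimpleGraph β} {H : SimpleGraph α} :
    Disjoint G (H.map f) ↔ Disjoint (G.comap f) H := by
  simp only [SimpleGraph.disjoint_left, SimpleGraph.map_adj, SimpleGraph.comap_adj]
  constructor
  · exact fun h a b hG hH => h _ _ hG ⟨a, b, hH, rfl, rfl⟩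
  · rintro h _ _ hG ⟨a, b, hH, rfl, rfl⟩
    exact h a b hG hH

theorem map_comap_eq_self_of_support_subset_range (f : α ↪ β) {G : SimpleGraph β}
    (h : G.support ⊆ Set.range f) : (G.comap f).map f = G := by
  refine le_antisymm (SimpleGraph.map_comap_le f G) fun u v huv => ?_
  obtain ⟨a, rfl⟩ := h huv.left_mem_support
  obtain ⟨b, rfl⟩ := h huv.right_mem_support
  exact SimpleGraph.map_adj_apply.2 huv

theorem ncard_support_le_two_mul_ncard_edgeSet [Finite α] (G : SimpleGraph α) :
    G.support.ncard ≤ 2 * G.edgeSet.ncard := by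
  classical
  have := Fintype.ofFinite α
  rw [Set.ncard_eq_toFinset_card', Set.ncard_eq_toFinset_card', ← SimpleGraph.edgeFinset,
    ← SimpleGraph.sum_degrees_support_eq_twice_card_edges, card_eq_sum_ones]
  refine sum_le_sum fun v hv => ?_
  exact (G.degree_pos_iff_mem_support v).2 (Set.mem_toFinset.1 hv)

theorem exists_mem_forall_ne_and_not_adj [Finite α] {G : SimpleGraph α} {Δ : ℕ}
    (hG : ∀ v, ndeg G v ≤ Δ) {S T : Set α} (hST : T.ncard * (Δ + 1) < S.ncard) :
    ∃ y ∈ S, ∀ t ∈ T, y ≠ t ∧ ¬ G.Adj t y := by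
  classical
  have := Fintype.ofFinite α
  have h_closed_nbhd : (⋃ t ∈ T.toFinset, insert t (G.neighborSet t)).ncard
      ≤ T.ncard * (Δ + 1) := by
    rw [Set.ncard_eq_toFinset_card' T, ← smul_eq_mul]
    refine (set_ncard_biUnion_le _ _).trans (sum_le_card_nsmul _ _ _ fun t _ => ?_)
    exact (Set.ncard_insert_le _ _).trans (Nat.succ_le_succ (hG t))
  obtain ⟨y, hyS, hy⟩ := Set.exists_mem_notMem_of_ncard_lt_ncard (h_closed_nbhd.trans_lt hST)
  simp only [Set.mem_toFinset, Set.mem_iUnion, Set.mem_insert_iff, SimpleGraph.mem_neighborSet,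
    not_exists, not_or] at hy
  exact ⟨y, hyS, hy⟩

theorem ndeg_swap [DecidableEq α] {G : SimpleGraph α} {x y : α}
    (hxy : ndeg G y = ndeg G x) (v : α) :
    ndeg G (Equiv.swap x y v) = ndeg G v := by
  rw [Equiv.swap_apply_def]
  split_ifs with hx hy
  · rw [hx, hxy]
  · rw [hy, hxy]
  · rfl

theorem disjoint_map_swap [DecidableEq α] {G H : SimpleGraph α} (hGH : Disjoint G H) {x y : α}
    (hy : ∀ t ∈ H.support \ {x}, y ≠ t ∧ ¬ G.Adj t y) :
    Disjoint G (H.map (Equiv.swap x y).toEmbedding) := by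
  have swap_eq {t : α} (ht : t ∈ H.support) (htx : t ≠ x) : Equiv.swap x y t = t :=
    Equiv.swap_apply_of_ne_of_ne htx (hy t ⟨ht, htx⟩).1.symm
  rw [disjoint_map_iff_disjoint_comap]
  simp only [SimpleGraph.disjoint_left, SimpleGraph.comap_adj, Equiv.coe_toEmbedding]
  intro a b hG hH
  have ha := hH.left_mem_support
  have hb := hH.right_mem_support
  obtain rfl | hax := eq_or_ne a x
  · rw [Equiv.swap_apply_left, swap_eq hb hH.ne'] at hG
    exact (hy b ⟨hb, hH.ne'⟩).2 hG.symm
  rw [swap_eq ha hax] at hG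
  obtain rfl | hbx := eq_or_ne b x
  · rw [Equiv.swap_apply_left] at hG
    exact (hy a ⟨ha, hax⟩).2 hG
  · rw [swap_eq hb hbx] at hG
    exact SimpleGraph.disjoint_left.1 hGH a b hG hH

theorem support_map_swap [DecidableEq α] {H : SimpleGraph α} {x y : α} (hx : x ∈ H.support)
    (hy : ∀ t ∈ H.support \ {x}, y ≠ t) :
    (H.map (Equiv.swap x y).toEmbedding).support = insert y (H.support \ {x}) := by
  have h_fix : Set.EqOn (Equiv.swap x y) id (H.support \ {x}) := fun t ht =>
    Equiv.swap_apply_of_ne_of_ne ht.2 (hy t ht).symm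
  rw [SimpleGraph.support_map, Equiv.coe_toEmbedding]
  nth_rw 1 [← Set.insert_sdiff_self_of_mem hx]
  rw [Set.image_insert_eq, Equiv.swap_apply_left, h_fix.image_eq, Set.image_id]

end GraphLemmas

section EdgeAddition

variable {α β : Type*} [Fintype α] [Fintype β]

/-- The multiset of the degrees of all vertices of `G`. -/
noncomputable def degreeMultiset (G : SimpleGraph α) : Multiset ℕ :=
  univ.val.map (ndeg G)

/-- `H` is a solution of the edge addition problem for `G`, the budget `k` and the target `σ`. The
set of added pairs is encoded as the edge set of the graph `H`. -/
structure IsEdgeAddition (G : SimpleGraph α) (k : ℕ) (σ : Multiset ℕ) (H : SimpleGraph α) :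
    Prop where
  disjoint : Disjoint G H
  ncard_edgeSet_le : H.edgeSet.ncard ≤ k
  degreeMultiset_eq : degreeMultiset (G ⊔ H) = σ

theorem exists_isEdgeAddition_iff_exists_finset {G : SimpleGraph α} {k : ℕ} {σ : Multiset ℕ} :
    (∃ H, IsEdgeAddition G k σ H) ↔
      ∃ A : Finset (Sym2 α), (∀ e ∈ A, ¬ e.IsDiag ∧ e ∉ G.edgeSet) ∧ A.card ≤ k ∧
        (univ.val.map fun v => ndeg (G ⊔ SimpleGraph.fromEdgeSet ↑A) v) = σ := by
  classical
  constructor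
  · rintro ⟨H, hGH, hk, hσ⟩
    refine ⟨H.edgeFinset, fun e he => ?_, ?_, ?_⟩
    · rw [SimpleGraph.mem_edgeFinset] at he
      exact ⟨H.not_isDiag_of_mem_edgeSet he,
        Set.disjoint_right.1 (SimpleGraph.disjoint_edgeSet.2 hGH) he⟩
    · rwa [← Set.ncard_coe_finset, SimpleGraph.coe_edgeFinset]
    · rwa [SimpleGraph.coe_edgeFinset, SimpleGraph.fromEdgeSet_edgeSet]
  · rintro ⟨A, hA, hk, hσ⟩
    refine ⟨SimpleGraph.fromEdgeSet ↑A, ?_, ?_, hσ⟩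
    · exact (G.disjoint_fromEdgeSet _).2 (Set.disjoint_right.2 fun e he => (hA e he).2)
    · rw [SimpleGraph.edgeSet_fromEdgeSet]
      exact (Set.ncard_le_ncard Set.sdiff_subset).trans ((Set.ncard_coe_finset A).trans_le hk)

theorem map_univ_val_eq_add_compl {γ : Type*} [DecidableEq β] (f : α ↪ β) (g : β → γ) :
    univ.val.map g = (univ.val.map fun a => g (f a)) + (univ.map f)ᶜ.val.map g := by
  rw [← union_compl (univ.map f), ← disjUnion_eq_union _ _ disjoint_compl_right, disjUnion_val,
    Multiset.map_add, map_val, Multiset.map_map]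
  rfl

theorem degreeMultiset_sup_map [DecidableEq β] (f : α ↪ β) {G : SimpleGraph β}
    {K : SimpleGraph α} (h : Disjoint G (K.map f)) :
    degreeMultiset (G ⊔ K.map f) =
      (univ.val.map fun a => ndeg G (f a) + ndeg K a) + (univ.map f)ᶜ.val.map (ndeg G) := by
  rw [degreeMultiset, map_univ_val_eq_add_compl f]
  simp only [ndeg_sup_of_disjoint h, ndeg_map]
  congr 1
  refine Multiset.map_congr rfl fun w hw => ?_
  rw [ndeg_map_of_notMem_range, add_zero]
  simpa using hw

theorem isEdgeAddition_map_iff [DecidableEq β] (f : α ↪ β) {G : SimpleGraph β}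
    {K : SimpleGraph α} {k : ℕ} {τ : Multiset ℕ} :
    IsEdgeAddition G k ((univ.map f)ᶜ.val.map (ndeg G) + τ) (K.map f) ↔
      Disjoint (G.comap f) K ∧ K.edgeSet.ncard ≤ k ∧
        (univ.val.map fun a => ndeg G (f a) + ndeg K a) = τ := by
  rw [← disjoint_map_iff_disjoint_comap]
  have degreeMultiset_eq_iff (h : Disjoint G (K.map f)) :
      degreeMultiset (G ⊔ K.map f) = (univ.map f)ᶜ.val.map (ndeg G) + τ ↔
        (univ.val.map fun a => ndeg G (f a) + ndeg K a) = τ := by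
    rw [degreeMultiset_sup_map f h, add_comm, add_right_inj]
  constructor
  · rintro ⟨h, hk, hσ⟩
    exact ⟨h, (ncard_edgeSet_map f K).symm.trans_le hk, (degreeMultiset_eq_iff h).1 hσ⟩
  · rintro ⟨h, hk, hτ⟩
    exact ⟨h, (ncard_edgeSet_map f K).trans_le hk, (degreeMultiset_eq_iff h).2 hτ⟩

theorem degreeMultiset_sup_map_equiv {G H : SimpleGraph α} (e : Equiv.Perm α)
    (he : ∀ v, ndeg G (e v) = ndeg G v) (h : Disjoint G H)
    (h' : Disjoint G (H.map e.toEmbedding)) :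
    degreeMultiset (G ⊔ H.map e.toEmbedding) = degreeMultiset (G ⊔ H) := by
  classical
  rw [degreeMultiset_sup_map _ h', map_univ_equiv, compl_univ, empty_val, Multiset.map_zero,
    add_zero]
  exact Multiset.map_congr rfl fun v _ => by
    rw [Equiv.coe_toEmbedding, he, ndeg_sup_of_disjoint h]

theorem IsEdgeAddition.notMem_support {G H : SimpleGraph β} {k Δ : ℕ} {τ : Multiset ℕ}
    (f : α ↪ β) (hH : IsEdgeAddition G k ((univ.val.map fun a => ndeg G (f a)) + τ) H)
    (hG : ∀ a, Δ < ndeg G (f a)) (hτ : ∀ d ∈ τ, d ≤ Δ) (a : α) : f a ∉ H.support := by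
  classical
  have h_deg := hH.degreeMultiset_eq
  rw [degreeMultiset, map_univ_val_eq_add_compl f] at h_deg
  simp only [ndeg_sup_of_disjoint hH.disjoint] at h_deg
  have h_eq := eq_of_add_map_eq_add_map_of_le hG (fun _ => Nat.le_add_right _ _) hτ h_deg
  exact ndeg_eq_zero_iff_notMem_support.1 (Nat.left_eq_add.1 (congrFun h_eq a))

end EdgeAddition

section Exchange

variable {V : Type*} [Fintype V] {G : SimpleGraph V} {k Δ : ℕ} {σ : Multiset ℕ} {W : Set V}

theorem IsEdgeAddition.exists_support_sdiff_ssubset {H : SimpleGraph V}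
    (hH : IsEdgeAddition G k σ H)
    (hG : ∀ v, ndeg G v ≤ Δ)
    (hW : ∀ x ∉ W, 2 * k * (Δ + 1) ≤ {w ∈ W | ndeg G w = ndeg G x}.ncard)
    (hHW : ¬ H.support ⊆ W) :
    ∃ H', IsEdgeAddition G k σ H' ∧ H'.support \ W ⊂ H.support \ W := by
  classical
  obtain ⟨x, hxH, hxW⟩ := Set.not_subset.1 hHW
  have h_few : (H.support \ {x}).ncard * (Δ + 1) < {w ∈ W | ndeg G w = ndeg G x}.ncard := by
    refine lt_of_lt_of_le (Nat.mul_lt_mul_of_pos_right ?_ Δ.succ_pos) (hW x hxW)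
    calc (H.support \ {x}).ncard < H.support.ncard := Set.ncard_sdiff_singleton_lt_of_mem hxH
      _ ≤ 2 * H.edgeSet.ncard := ncard_support_le_two_mul_ncard_edgeSet H
      _ ≤ 2 * k := Nat.mul_le_mul_left 2 hH.ncard_edgeSet_le
  obtain ⟨y, ⟨hyW, hxy⟩, hy⟩ := exists_mem_forall_ne_and_not_adj hG h_few
  have h_disj := disjoint_map_swap hH.disjoint hy
  refine ⟨H.map (Equiv.swap x y).toEmbedding, ⟨h_disj, ?_, ?_⟩, ?_⟩
  · exact (ncard_edgeSet_map _ H).trans_le hH.ncard_edgeSet_le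
  · rw [degreeMultiset_sup_map_equiv _ (ndeg_swap hxy) hH.disjoint h_disj, hH.degreeMultiset_eq]
  · rw [support_map_swap hxH fun t ht => (hy t ht).1, Set.insert_sdiff_of_mem _ hyW]
    exact ⟨Set.sdiff_subset_sdiff_left Set.sdiff_subset, fun h => (h ⟨hxH, hxW⟩).1.2 rfl⟩

theorem IsEdgeAddition.exists_support_subset {H : SimpleGraph V} (hH : IsEdgeAddition G k σ H)
    (hG : ∀ v, ndeg G v ≤ Δ)
    (hW : ∀ x ∉ W, 2 * k * (Δ + 1) ≤ {w ∈ W | ndeg G w = ndeg G x}.ncard) :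
    ∃ H', IsEdgeAddition G k σ H' ∧ H'.support ⊆ W := by
  induction hn : (H.support \ W).ncard using Nat.strong_induction_on generalizing H with
  | _ n ih =>
    by_cases hHW : H.support ⊆ W
    · exact ⟨H, hH, hHW⟩
    · obtain ⟨H', hH', hlt⟩ := hH.exists_support_sdiff_ssubset hG hW hHW
      exact ih _ (hn ▸ Set.ncard_lt_ncard hlt) hH' rfl

end Exchange

section KernelGraph

variable {V : Type*} (G : SimpleGraph V) (W : Finset V) (h : ℕ)

theorem comap_inl_kernelGraph :
    (kernelGraph G W h).comap Function.Embedding.inl =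
      G.comap (Function.Embedding.subtype (· ∈ W)) :=
  rfl

theorem ndeg_kernelGraph_inl [Finite V] {u : ↥W} (hu : ndeg G u ≤ h) :
    ndeg (kernelGraph G W h) (Sum.inl u) = ndeg G u := by
  set r := (G.neighborSet ↑u \ ↑W).ncard with hr
  have hrh : r ≤ h := (Set.ncard_le_ncard Set.sdiff_subset).trans hu
  have h_nbhd : (kernelGraph G W h).neighborSet (Sum.inl u) =
      Sum.inl '' {w : ↥W | G.Adj u w} ∪ Sum.inr '' {j : Fin h | (j : ℕ) < r} := by
    ext (w | j) <;> simp [kernelGraph, hr]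
  have h_inside : {w : ↥W | G.Adj u w}.ncard = (G.neighborSet ↑u ∩ ↑W).ncard := by
    rw [← Set.ncard_image_of_injective _ Subtype.val_injective]
    congr 1
    ext w
    simp [and_comm]
  have h_disj : Disjoint (Sum.inl '' {w : ↥W | G.Adj u w})
      (Sum.inr '' {j : Fin h | (j : ℕ) < r}) := Set.disjoint_image_inl_image_inr
  rw [ndeg, h_nbhd, Set.ncard_union_eq h_disj, Set.ncard_image_of_injective _ Sum.inl_injective,
    Set.ncard_image_of_injective _ Sum.inr_injective, h_inside, ncard_setOf_fin_val_lt hrh, hr,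
    Set.ncard_inter_add_ncard_sdiff_eq_ncard, ndeg]

theorem le_ndeg_kernelGraph_inr_add_one (j : Fin h) :
    h ≤ ndeg (kernelGraph G W h) (Sum.inr j) + 1 := by
  have h_clique : Sum.inr '' {j}ᶜ ⊆ (kernelGraph G W h).neighborSet (Sum.inr j) := by
    rintro _ ⟨i, hi, rfl⟩
    exact Ne.symm hi
  have h_card : ({j}ᶜ : Set (Fin h)).ncard + 1 = h := by
    rw [Set.ncard_compl, Set.ncard_singleton, Nat.card_fin, Nat.sub_add_cancel j.pos]
  have h_le := Set.ncard_le_ncard h_clique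
  rw [Set.ncard_image_of_injective _ Sum.inr_injective] at h_le
  exact h_card.ge.trans (Nat.succ_le_succ h_le)

variable {G W h} {k Δ : ℕ} {τ : Multiset ℕ}

theorem isEdgeAddition_map_val_iff_map_inl [Fintype V] [DecidableEq V]
    (hG : ∀ u : ↥W, ndeg G u ≤ h) {K : SimpleGraph ↥W} :
    IsEdgeAddition G k (Wᶜ.val.map (ndeg G) + τ) (K.map (Function.Embedding.subtype _)) ↔
      IsEdgeAddition (kernelGraph G W h) k
        ((univ.val.map fun j => ndeg (kernelGraph G W h) (Sum.inr j)) + τ)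
        (K.map Function.Embedding.inl) := by
  have h_val := isEdgeAddition_map_iff (Function.Embedding.subtype (· ∈ W)) (G := G) (K := K)
    (k := k) (τ := τ)
  have h_inl := isEdgeAddition_map_iff Function.Embedding.inl (G := kernelGraph G W h) (K := K)
    (k := k) (τ := τ)
  rw [univ_eq_attach, attach_map_val] at h_val
  rw [compl_map_inl_univ, map_val, Multiset.map_map, comap_inl_kernelGraph] at h_inl
  simp only [Function.Embedding.inl_apply, ndeg_kernelGraph_inl G W h (hG _)] at h_inl
  exact h_val.trans h_inl.symm

theorem IsEdgeAddition.support_subset_range_inl {H : SimpleGraph (↥W ⊕ Fin h)}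
    (hH : IsEdgeAddition (kernelGraph G W h) k
      ((univ.val.map fun j => ndeg (kernelGraph G W h) (Sum.inr j)) + τ) H)
    (hh : Δ + 2 ≤ h) (hτ : ∀ d ∈ τ, d ≤ Δ) :
    H.support ⊆ Set.range Sum.inl := by
  rintro (u | j) hx
  · exact ⟨u, rfl⟩
  · refine absurd hx (hH.notMem_support .inr (fun j => ?_) hτ j)
    have := le_ndeg_kernelGraph_inr_add_one G W h j
    rw [Function.Embedding.inr_apply]
    omega

theorem exists_isEdgeAddition_iff_kernelGraph [Fintype V] [DecidableEq V]
    (hG : ∀ v, ndeg G v ≤ Δ) (hh : Δ + 2 ≤ h)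
    (hW : ∀ x ∉ W, 2 * k * (Δ + 1) ≤ {w ∈ (W : Set V) | ndeg G w = ndeg G x}.ncard)
    (hτ : ∀ d ∈ τ, d ≤ Δ) :
    (∃ H, IsEdgeAddition G k (Wᶜ.val.map (ndeg G) + τ) H) ↔
      ∃ H, IsEdgeAddition (kernelGraph G W h) k
        ((univ.val.map fun j => ndeg (kernelGraph G W h) (Sum.inr j)) + τ) H := by
  have transfer {K : SimpleGraph ↥W} := isEdgeAddition_map_val_iff_map_inl (k := k) (τ := τ)
    (fun u => (hG u).trans (by omega : Δ ≤ h)) (K := K)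
  constructor
  · rintro ⟨H₀, hH₀⟩
    obtain ⟨H, hH, hHW⟩ := hH₀.exists_support_subset hG hW
    have hHW' : H.support ⊆ Set.range (Function.Embedding.subtype (· ∈ W)) := by simpa using hHW
    rw [← map_comap_eq_self_of_support_subset_range _ hHW'] at hH
    exact ⟨_, transfer.1 hH⟩
  · rintro ⟨H, hH⟩
    rw [← map_comap_eq_self_of_support_subset_range Function.Embedding.inl
      (hH.support_subset_range_inl hh hτ)] at hH
    exact ⟨_, transfer.2 hH⟩

end KernelGraph

/-- `Ws i` consists of `m` vertices of degree `i` in `G`, or of all of them if there are fewer,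
for each `i ≤ Δ`. These are the sets `W_i'` of the truncated degree classes. -/
structure IsDegreeTruncation {V : Type*} (G : SimpleGraph V) (Δ m : ℕ) (Ws : ℕ → Finset V) :
    Prop where
  ndeg_eq : ∀ i ≤ Δ, ∀ v ∈ Ws i, ndeg G v = i
  card_eq : ∀ i ≤ Δ, (Ws i).card = min {v : V | ndeg G v = i}.ncard m

namespace IsDegreeTruncation

variable {V : Type*} [DecidableEq V] {G : SimpleGraph V} {Δ m : ℕ} {Ws : ℕ → Finset V}

theorem mem_biUnion_iff (hWs : IsDegreeTruncation G Δ m Ws) {v : V} (hv : ndeg G v ≤ Δ) :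
    v ∈ (range (Δ + 1)).biUnion Ws ↔ v ∈ Ws (ndeg G v) := by
  simp only [mem_biUnion, mem_range, Nat.lt_succ_iff]
  constructor
  · rintro ⟨i, hi, hvi⟩
    rwa [hWs.ndeg_eq i hi v hvi]
  · exact fun h => ⟨_, hv, h⟩

theorem card_biUnion_le (hWs : IsDegreeTruncation G Δ m Ws) :
    ((range (Δ + 1)).biUnion Ws).card ≤ (Δ + 1) * m := by
  refine (card_biUnion_le_card_mul _ _ m fun i hi => ?_).trans_eq (by rw [card_range])
  rw [hWs.card_eq i (Nat.lt_succ_iff.1 (mem_range.1 hi))]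
  exact min_le_right _ _

theorem le_ncard_of_notMem_biUnion [Finite V] (hWs : IsDegreeTruncation G Δ m Ws) {x : V}
    (hx : ndeg G x ≤ Δ) (hxW : x ∉ (range (Δ + 1)).biUnion Ws) :
    m ≤ {w ∈ ((range (Δ + 1)).biUnion Ws : Set V) | ndeg G w = ndeg G x}.ncard := by
  have h_class : ∀ y ∈ Ws (ndeg G x), ndeg G y = ndeg G x := hWs.ndeg_eq _ hx
  have h_truncated : (Ws (ndeg G x)).card < {v : V | ndeg G v = ndeg G x}.ncard := by
    rw [← Set.ncard_coe_finset]
    refine Set.ncard_lt_ncard ⟨h_class, fun h => hxW ?_⟩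
    exact (hWs.mem_biUnion_iff hx).2 (h rfl)
  calc m ≤ (Ws (ndeg G x)).card := by
        have := hWs.card_eq _ hx
        omega
    _ = (Ws (ndeg G x) : Set V).ncard := (Set.ncard_coe_finset _).symm
    _ ≤ _ := by
        refine Set.ncard_le_ncard fun y hy => ⟨?_, h_class y hy⟩
        exact mem_biUnion.2 ⟨_, mem_range.2 (Nat.lt_succ_iff.2 hx), hy⟩

theorem map_ndeg_compl_biUnion [Fintype V] (hWs : IsDegreeTruncation G Δ m Ws)
    (hG : ∀ v, ndeg G v ≤ Δ) :
    ((range (Δ + 1)).biUnion Ws)ᶜ.val.map (ndeg G) =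
      ∑ i ∈ range (Δ + 1), Multiset.replicate
        ({v : V | ndeg G v = i}.ncard - min {v : V | ndeg G v = i}.ncard m) i := by
  ext i
  have h_count : (((range (Δ + 1)).biUnion Ws)ᶜ.val.map (ndeg G)).count i =
      {v | ndeg G v = i ∧ v ∉ Ws i}.ncard := by
    rw [Multiset.count_map, ← filter_val, card_val, ← Set.ncard_coe_finset]
    congr 1
    ext v
    have := hWs.mem_biUnion_iff (hG v)
    simp only [coe_filter, mem_compl, this, Set.mem_ofPred_eq]
    constructor
    · rintro ⟨hv, rfl⟩
      exact ⟨rfl, hv⟩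
    · rintro ⟨rfl, hv⟩
      exact ⟨hv, rfl⟩
  rw [h_count, count_sum_range_replicate]
  split_ifs with hi
  · have hi' := Nat.lt_succ_iff.1 hi
    have h_sub : (Ws i : Set V) ⊆ {v | ndeg G v = i} := hWs.ndeg_eq i hi'
    rw [← hWs.card_eq i hi', ← Set.ncard_coe_finset, ← Set.ncard_sdiff h_sub]
    rfl
  · rw [Set.ncard_eq_zero, Set.eq_empty_iff_forall_notMem]
    rintro v ⟨rfl, -⟩
    exact hi (Nat.lt_succ_iff.2 (hG v))

end IsDegreeTruncation

theorem kernelization_for_edge_addition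
    {V : Type*} [Fintype V] [DecidableEq V] (G : SimpleGraph V)
    (k Δ : ℕ) (σ : Multiset ℕ) (hσub : ∀ x ∈ σ, x ≤ Δ) (hσmem : Δ ∈ σ)
    (hG : ∀ v : V, ndeg G v ≤ Δ)
    (Ws : ℕ → Finset V)
    (hWsub : ∀ i ≤ Δ, ∀ v ∈ Ws i, ndeg G v = i)
    (hWcard : ∀ i ≤ Δ,
      (Ws i).card = min {v : V | ndeg G v = i}.ncard (2 * k * (Δ + 1)))
    (hcount : ∀ i ≤ Δ,
      {v : V | ndeg G v = i}.ncard - min {v : V | ndeg G v = i}.ncard (2 * k * (Δ + 1))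
        ≤ σ.count i)
    (W : Finset V) (hW : W = (Finset.range (Δ + 1)).biUnion Ws)
    (G' : SimpleGraph (↥W ⊕ Fin (Δ + 2))) (hG' : G' = kernelGraph G W (Δ + 2))
    (σ' : Multiset ℕ)
    (hσ' : σ' = ((Finset.univ : Finset (Fin (Δ + 2))).val.map fun j =>
        ndeg G' (Sum.inr j)) +
      (σ - (Finset.range (Δ + 1)).sum fun i =>
        Multiset.replicate
          ({v : V | ndeg G v = i}.ncard -
            min {v : V | ndeg G v = i}.ncard (2 * k * (Δ + 1))) i)) :
    Fintype.card (↥W ⊕ Fin (Δ + 2)) ≤ 2 * k * (Δ + 1) ^ 2 + Δ + 2 ∧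
    ((∃ A : Finset (Sym2 V),
        (∀ e ∈ A, ¬ e.IsDiag ∧ e ∉ G.edgeSet) ∧ A.card ≤ k ∧
        (Finset.univ.val.map fun v : V =>
          ndeg (G ⊔ SimpleGraph.fromEdgeSet ↑A) v) = σ) ↔
      (∃ A' : Finset (Sym2 (↥W ⊕ Fin (Δ + 2))),
        (∀ e ∈ A', ¬ e.IsDiag ∧ e ∉ G'.edgeSet) ∧ A'.card ≤ k ∧
        (Finset.univ.val.map fun v : ↥W ⊕ Fin (Δ + 2) =>
          ndeg (G' ⊔ SimpleGraph.fromEdgeSet ↑A') v) = σ')) := by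
  subst hW hG' hσ'
  have hWs : IsDegreeTruncation G Δ (2 * k * (Δ + 1)) Ws := ⟨hWsub, hWcard⟩
  refine ⟨?_, ?_⟩
  · rw [Fintype.card_sum, Fintype.card_fin, Fintype.card_coe]
    linarith [hWs.card_biUnion_le]
  · rw [← exists_isEdgeAddition_iff_exists_finset, ← exists_isEdgeAddition_iff_exists_finset,
      ← exists_isEdgeAddition_iff_kernelGraph hG le_rfl
        (fun x => hWs.le_ncard_of_notMem_biUnion (hG x))
        (fun d hd => hσub d (Multiset.mem_of_le tsub_le_self hd)),
      hWs.map_ndeg_compl_biUnion hG, add_tsub_cancel_of_le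
        (sum_range_replicate_le fun i hi => hcount i (Nat.lt_succ_iff.1 hi))]
end
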